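/- arXiv:2512.03378 — 3 statements merged into one kernel-verified Lean document; each statement's English description precedes it below -/
import Mathlib

section
/- Let β > 0, μ ≥ 1 be real numbers, let s ∈ (0,1), and let ℓ ≥ 1, j, k be natural numbers with 2ℓ ≤ j ≤ k. For 0 ≤ m ≤ k define M_{m,k} := s^{−((μ−1)/(2β))(1/(m+1) − 1/(k+1))} · (m!)^{1/(m+1)} / (k!)^{1/(k+1)}. Then for every i with ℓ ≤ i ≤ j−ℓ one has the exact identity binom(j,i) · M_{i,k}^{i+1} · M_{j−i,k}^{j−i+1} = j! · (k!)^{−(j+2)/(k+1)} · s^{−((μ−1)/(2β))·(2k−j)/(k+1)}, and consequently ∑_{i=ℓ}^{j−ℓ} binom(j,i) · M_{i,k}^{i+1} · M_{j−i,k}^{j−i+1} ≤ j · j! · (k!)^{−(j+2)/(k+1)} · s^{−((μ−1)/(2β))·(2k−j)/(k+1)}. -/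
/-- Verification of the first compatibility condition of the ascending-chain
theorem: for the time-weighted bridge coefficients
`M m = s^{−((μ−1)/(2β))(1/(m+1) − 1/(k+1))} · (m!)^{1/(m+1)} / (k!)^{1/(k+1)}`,
each term of the sum equals
`j! · (k!)^{−(j+2)/(k+1)} · s^{−((μ−1)/(2β))·(2k−j)/(k+1)}`, so the sum is at
most `j` times this quantity. -/
theorem stmt_1 (β μ s : ℝ) (hβ : 0 < β) (hμ : 1 ≤ μ) (hs : s ∈ Set.Ioo (0 : ℝ) 1)
    (ℓ j k : ℕ) (hℓ : 1 ≤ ℓ) (hj : 2 * ℓ ≤ j) (hjk : j ≤ k)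
    (M : ℕ → ℝ)
    (hM : ∀ m : ℕ, m ≤ k → M m
      = s ^ (-((μ - 1) / (2 * β)) * (1 / ((m : ℝ) + 1) - 1 / ((k : ℝ) + 1)))
          * (Nat.factorial m : ℝ) ^ ((1 : ℝ) / ((m : ℝ) + 1))
          / (Nat.factorial k : ℝ) ^ ((1 : ℝ) / ((k : ℝ) + 1))) :
    (∀ i : ℕ, ℓ ≤ i → i ≤ j - ℓ →
      (j.choose i : ℝ) * (M i) ^ ((i : ℝ) + 1) * (M (j - i)) ^ (((j - i : ℕ) : ℝ) + 1)
        = (Nat.factorial j : ℝ)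
            * (Nat.factorial k : ℝ) ^ (-(((j : ℝ) + 2) / ((k : ℝ) + 1)))
            * s ^ (-((μ - 1) / (2 * β)) * ((2 * (k : ℝ) - j) / ((k : ℝ) + 1)))) ∧
    ∑ i ∈ Finset.Icc ℓ (j - ℓ),
        (j.choose i : ℝ) * (M i) ^ ((i : ℝ) + 1) * (M (j - i)) ^ (((j - i : ℕ) : ℝ) + 1)
      ≤ (j : ℝ) * (Nat.factorial j : ℝ)
          * (Nat.factorial k : ℝ) ^ (-(((j : ℝ) + 2) / ((k : ℝ) + 1)))
          * s ^ (-((μ - 1) / (2 * β)) * ((2 * (k : ℝ) - j) / ((k : ℝ) + 1))) := by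
  obtain ⟨hs0, hs1⟩ := hs
  have hk0 : (0 : ℝ) < (k : ℝ) + 1 := by positivity
  have hK : (0 : ℝ) < (Nat.factorial k : ℝ) := by positivity
  have key : ∀ m : ℕ, m ≤ k → (M m) ^ ((m : ℝ) + 1)
      = s ^ (-((μ - 1) / (2 * β)) * (1 - ((m : ℝ) + 1) / ((k : ℝ) + 1)))
        * (Nat.factorial m : ℝ)
        * (Nat.factorial k : ℝ) ^ (-(((m : ℝ) + 1) / ((k : ℝ) + 1))) := by
    intro m hm
    have hm0 : (0 : ℝ) < (m : ℝ) + 1 := by positivity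
    have hF : (0 : ℝ) < (Nat.factorial m : ℝ) := by positivity
    rw [hM m hm, Real.div_rpow (by positivity) (by positivity),
      Real.mul_rpow (by positivity) (by positivity), ← Real.rpow_mul hs0.le,
      ← Real.rpow_mul hF.le, ← Real.rpow_mul hK.le, Real.rpow_neg hK.le, div_eq_mul_inv]
    have e1 : -((μ - 1) / (2 * β)) * (1 / ((m : ℝ) + 1) - 1 / ((k : ℝ) + 1)) * ((m : ℝ) + 1)
        = -((μ - 1) / (2 * β)) * (1 - ((m : ℝ) + 1) / ((k : ℝ) + 1)) := by
      rw [mul_assoc]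
      congr 1
      field_simp
    have e2 : (1 : ℝ) / ((m : ℝ) + 1) * ((m : ℝ) + 1) = 1 := by field_simp
    have e3 : (1 : ℝ) / ((k : ℝ) + 1) * ((m : ℝ) + 1) = ((m : ℝ) + 1) / ((k : ℝ) + 1) := by
      ring
    rw [e1, e2, e3, Real.rpow_one]
  have main : ∀ i : ℕ, ℓ ≤ i → i ≤ j - ℓ →
      (j.choose i : ℝ) * (M i) ^ ((i : ℝ) + 1) * (M (j - i)) ^ (((j - i : ℕ) : ℝ) + 1)
        = (Nat.factorial j : ℝ)
            * (Nat.factorial k : ℝ) ^ (-(((j : ℝ) + 2) / ((k : ℝ) + 1)))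
            * s ^ (-((μ - 1) / (2 * β)) * ((2 * (k : ℝ) - j) / ((k : ℝ) + 1))) := by
    intro i h1 h2
    have hij : i ≤ j := by omega
    rw [key i (by omega), key (j - i) (by omega)]
    have hc : (j.choose i : ℝ) * (Nat.factorial i : ℝ) * (Nat.factorial (j - i) : ℝ)
        = (Nat.factorial j : ℝ) := by
      exact_mod_cast Nat.choose_mul_factorial_mul_factorial hij
    have a1 : -(((j : ℝ) + 2) / ((k : ℝ) + 1))
        = -(((i : ℝ) + 1) / ((k : ℝ) + 1)) + -((((j - i : ℕ) : ℝ) + 1) / ((k : ℝ) + 1)) := by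
      rw [Nat.cast_sub hij]
      ring
    have a2 : -((μ - 1) / (2 * β)) * ((2 * (k : ℝ) - j) / ((k : ℝ) + 1))
        = -((μ - 1) / (2 * β)) * (1 - ((i : ℝ) + 1) / ((k : ℝ) + 1))
          + -((μ - 1) / (2 * β)) * (1 - (((j - i : ℕ) : ℝ) + 1) / ((k : ℝ) + 1)) := by
      rw [Nat.cast_sub hij, ← mul_add]
      congr 1
      field_simp
      ring
    rw [a1, a2, Real.rpow_add hK, Real.rpow_add hs0, ← hc]
    ring
  refine ⟨main, ?_⟩
  rw [Finset.sum_congr rfl (fun i hi => main i (Finset.mem_Icc.1 hi).1 (Finset.mem_Icc.1 hi).2),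
    Finset.sum_const, nsmul_eq_mul, Nat.card_Icc, mul_assoc (j : ℝ), mul_assoc (j : ℝ)]
  apply mul_le_mul_of_nonneg_right
  · exact_mod_cast (by omega : j - ℓ + 1 - ℓ ≤ j)
  · positivity
end

section
/- For all natural numbers j, k with 1 ≤ j ≤ k, one has j · j! · (k!)^{−(j+2)/(k+1)} ≤ e² · (j!)^{1/(j+1)} · (j!)^{(k−j)/(k+1)} · (k!)^{−1/(k+1)}. -/
/-- Factorial bookkeeping inequality: for `1 ≤ j ≤ k`,
`j · j! · (k!)^{−(j+2)/(k+1)} ≤ e² · (j!)^{1/(j+1)} · (j!)^{(k−j)/(k+1)} · (k!)^{−1/(k+1)}`. -/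
theorem stmt_3 (j k : ℕ) (hj : 1 ≤ j) (hjk : j ≤ k) :
    (j : ℝ) * (Nat.factorial j : ℝ)
        * (Nat.factorial k : ℝ) ^ (-(((j : ℝ) + 2) / ((k : ℝ) + 1)))
      ≤ Real.exp 2 * (Nat.factorial j : ℝ) ^ ((1 : ℝ) / ((j : ℝ) + 1))
          * (Nat.factorial j : ℝ) ^ (((k : ℝ) - j) / ((k : ℝ) + 1))
          * (Nat.factorial k : ℝ) ^ (-((1 : ℝ) / ((k : ℝ) + 1))) := by
  have hj0 : (0 : ℝ) < j := by exact_mod_cast hj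
  have hA : (0 : ℝ) < (Nat.factorial j : ℝ) := by exact_mod_cast Nat.factorial_pos j
  have hB : (0 : ℝ) < (Nat.factorial k : ℝ) := by exact_mod_cast Nat.factorial_pos k
  have hAB : Real.log (Nat.factorial j : ℝ) ≤ Real.log (Nat.factorial k : ℝ) :=
    Real.log_le_log hA (by exact_mod_cast Nat.factorial_le hjk)
  have h1 : (j : ℝ) * Real.log j - Real.log (Nat.factorial j : ℝ) ≤ j := by
    have h := Real.pow_div_factorial_le_exp (j : ℝ) hj0.le j
    have h2 := Real.log_le_log (by positivity) h
    rwa [Real.log_div (by positivity) (by positivity), Real.log_pow, Real.log_exp] at h2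
  have h3 : Real.log j ≤ j - 1 := Real.log_le_sub_one_of_pos hj0
  rw [Real.rpow_def_of_pos hA, Real.rpow_def_of_pos hA, Real.rpow_def_of_pos hB,
    Real.rpow_def_of_pos hB]
  have e1 := Real.exp_log hj0
  have e2 := Real.exp_log hA
  generalize Real.log (j : ℝ) = L at *
  generalize Real.log (Nat.factorial j : ℝ) = A at *
  generalize Real.log (Nat.factorial k : ℝ) = B at *
  have h4 : L ≤ 2 + A / ((j : ℝ) + 1) := by
    rw [← sub_le_iff_le_add', le_div_iff₀ (by positivity)]
    nlinarith
  have h5 : 0 ≤ ((j : ℝ) + 1) / ((k : ℝ) + 1) * (B - A) :=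
    mul_nonneg (by positivity) (sub_nonneg.2 hAB)
  calc (j : ℝ) * (Nat.factorial j : ℝ) * Real.exp (B * -(((j : ℝ) + 2) / ((k : ℝ) + 1)))
      = Real.exp (L + A + B * -(((j : ℝ) + 2) / ((k : ℝ) + 1))) := by
        rw [Real.exp_add, Real.exp_add, e1, e2]
    _ ≤ _ := by
        rw [← Real.exp_add, ← Real.exp_add, ← Real.exp_add, Real.exp_le_exp]
        have hk : (k : ℝ) + 1 ≠ 0 := by positivity
        have h6 : 2 + A * (1 / ((j : ℝ) + 1)) + A * (((k : ℝ) - j) / ((k : ℝ) + 1))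
            + B * -(1 / ((k : ℝ) + 1)) - (L + A + B * -(((j : ℝ) + 2) / ((k : ℝ) + 1)))
            = (2 + A / ((j : ℝ) + 1) - L) + ((j : ℝ) + 1) / ((k : ℝ) + 1) * (B - A) := by
          field_simp
          ring
        linarith
end

section
/- Let β > 0, μ ≥ 1 be real numbers, let s ∈ (0,1), let ℓ, j, k be natural numbers with 2ℓ ≤ j ≤ k, and let m ≥ 1 be a real number with (ℓ! : ℝ) ≤ √m. For 0 ≤ p ≤ k define M_{p,k} := s^{−((μ−1)/(2β))(1/(p+1) − 1/(k+1))} · (p!)^{1/(p+1)} / (k!)^{1/(k+1)}. Then ∑_{i=0}^{ℓ} binom(j,i) · M_{ℓ,k}^{(ℓ+1)(i+3/2)/(ℓ+3/2)} · M_{j−i,k}^{j−i+1} · ((k!)^{1/(k+1)} · m)^{(ℓ−i)/(2(ℓ+3/2))} ≤ (ℓ+1) · √m · j! · (k!)^{−(j+2)/(k+1)} · s^{−((μ−1)/(2β))·(2k−j)/(k+1)}. -/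
/-- Verification of the second compatibility condition of the ascending-chain
theorem: with the time-weighted bridge coefficients
`M p = s^{−((μ−1)/(2β))(1/(p+1) − 1/(k+1))} · (p!)^{1/(p+1)} / (k!)^{1/(k+1)}`
and `ℓ! ≤ √m`, the weighted sum is bounded by
`(ℓ+1) · √m · j! · (k!)^{−(j+2)/(k+1)} · s^{−((μ−1)/(2β))·(2k−j)/(k+1)}`. -/
theorem stmt_11 (β μ s : ℝ) (hβ : 0 < β) (hμ : 1 ≤ μ) (hs : s ∈ Set.Ioo (0 : ℝ) 1)
    (ℓ j k : ℕ) (hj : 2 * ℓ ≤ j) (hjk : j ≤ k)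
    (m : ℝ) (hm : 1 ≤ m) (hfact : (Nat.factorial ℓ : ℝ) ≤ Real.sqrt m)
    (M : ℕ → ℝ)
    (hM : ∀ p : ℕ, p ≤ k → M p
      = s ^ (-((μ - 1) / (2 * β)) * (1 / ((p : ℝ) + 1) - 1 / ((k : ℝ) + 1)))
          * (Nat.factorial p : ℝ) ^ ((1 : ℝ) / ((p : ℝ) + 1))
          / (Nat.factorial k : ℝ) ^ ((1 : ℝ) / ((k : ℝ) + 1))) :
    ∑ i ∈ Finset.Icc 0 ℓ,
        (j.choose i : ℝ)
          * (M ℓ) ^ (((ℓ : ℝ) + 1) * ((i : ℝ) + 3 / 2) / ((ℓ : ℝ) + 3 / 2))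
          * (M (j - i)) ^ (((j - i : ℕ) : ℝ) + 1)
          * ((Nat.factorial k : ℝ) ^ ((1 : ℝ) / ((k : ℝ) + 1)) * m)
              ^ (((ℓ : ℝ) - i) / (2 * ((ℓ : ℝ) + 3 / 2)))
      ≤ ((ℓ : ℝ) + 1) * Real.sqrt m * (Nat.factorial j : ℝ)
          * (Nat.factorial k : ℝ) ^ (-(((j : ℝ) + 2) / ((k : ℝ) + 1)))
          * s ^ (-((μ - 1) / (2 * β)) * ((2 * (k : ℝ) - j) / ((k : ℝ) + 1))) := by
  obtain ⟨hs0, hs1⟩ := hs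
  set a : ℝ := (μ - 1) / (2 * β) with ha
  have ha0 : 0 ≤ a := div_nonneg (by linarith) (by linarith)
  have hG : (0 : ℝ) < (Nat.factorial k : ℝ) := by exact_mod_cast Nat.factorial_pos k
  set G : ℝ := (Nat.factorial k : ℝ) with hGdef
  have hK : (0 : ℝ) < (k : ℝ) + 1 := by positivity
  have hm0 : 0 < m := by linarith
  have key : ∀ p : ℕ, p ≤ k → ∀ e : ℝ, (M p) ^ e
      = s ^ (-a * (1 / ((p : ℝ) + 1) - 1 / ((k : ℝ) + 1)) * e)
        * (Nat.factorial p : ℝ) ^ (e / ((p : ℝ) + 1)) * G ^ (-(e / ((k : ℝ) + 1))) := by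
    intro p hp e
    have hP : (0 : ℝ) < (Nat.factorial p : ℝ) := by exact_mod_cast Nat.factorial_pos p
    rw [hM p hp, Real.div_rpow (by positivity) (by positivity),
      Real.mul_rpow (by positivity) (by positivity), ← Real.rpow_mul hs0.le,
      ← Real.rpow_mul hP.le, ← Real.rpow_mul hG.le, Real.rpow_neg hG.le, div_eq_mul_inv]
    rw [one_div_mul_eq_div, one_div_mul_eq_div]
  have term : ∀ i ∈ Finset.Icc 0 ℓ,
      (j.choose i : ℝ)
          * (M ℓ) ^ (((ℓ : ℝ) + 1) * ((i : ℝ) + 3 / 2) / ((ℓ : ℝ) + 3 / 2))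
          * (M (j - i)) ^ (((j - i : ℕ) : ℝ) + 1)
          * (G ^ ((1 : ℝ) / ((k : ℝ) + 1)) * m)
              ^ (((ℓ : ℝ) - i) / (2 * ((ℓ : ℝ) + 3 / 2)))
      ≤ Real.sqrt m * (Nat.factorial j : ℝ)
          * G ^ (-(((j : ℝ) + 2) / ((k : ℝ) + 1)))
          * s ^ (-a * ((2 * (k : ℝ) - j) / ((k : ℝ) + 1))) := by
    intro i hi
    have hiℓ : i ≤ ℓ := (Finset.mem_Icc.mp hi).2
    have hij : i ≤ j := by omega
    have hiℓ' : (i : ℝ) ≤ ℓ := by exact_mod_cast hiℓ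
    have hL : (0 : ℝ) < (ℓ : ℝ) + 3 / 2 := by positivity
    have hL1 : (0 : ℝ) < (ℓ : ℝ) + 1 := by positivity
    obtain ⟨θ, hθ⟩ : ∃ θ : ℝ, θ = ((i : ℝ) + 3 / 2) / ((ℓ : ℝ) + 3 / 2) := ⟨_, rfl⟩
    have hθ0 : 0 ≤ θ := by rw [hθ]; positivity
    have hθ1 : θ ≤ 1 := by rw [hθ, div_le_one hL]; linarith
    have hθm : θ * ((ℓ : ℝ) + 3 / 2) = (i : ℝ) + 3 / 2 := by rw [hθ]; field_simp
    have e1 : ((ℓ : ℝ) + 1) * ((i : ℝ) + 3 / 2) / ((ℓ : ℝ) + 3 / 2) = ((ℓ : ℝ) + 1) * θ := by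
      rw [hθ]; ring
    have e2 : ((ℓ : ℝ) - i) / (2 * ((ℓ : ℝ) + 3 / 2)) = (1 - θ) / 2 := by
      rw [hθ]; field_simp; ring
    have hsub : ((j - i : ℕ) : ℝ) = (j : ℝ) - i := Nat.cast_sub hij
    have hji : (0 : ℝ) < ((j - i : ℕ) : ℝ) + 1 := by positivity
    rw [e1, e2, key ℓ (by omega), key (j - i) (by omega),
      Real.mul_rpow (by positivity) hm0.le, ← Real.rpow_mul hG.le,
      mul_div_cancel_left₀ θ hL1.ne', div_self hji.ne', Real.rpow_one]
    have hGe : G ^ (-(((ℓ : ℝ) + 1) * θ / ((k : ℝ) + 1)))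
        * G ^ (-((((j - i : ℕ) : ℝ) + 1) / ((k : ℝ) + 1)))
        * G ^ (1 / ((k : ℝ) + 1) * ((1 - θ) / 2)) = G ^ (-(((j : ℝ) + 2) / ((k : ℝ) + 1))) := by
      rw [← Real.rpow_add hG, ← Real.rpow_add hG]
      congr 1
      rw [hsub]
      field_simp
      linarith
    have hse : s ^ (-a * (1 / ((ℓ : ℝ) + 1) - 1 / ((k : ℝ) + 1)) * (((ℓ : ℝ) + 1) * θ))
        * s ^ (-a * (1 / (((j - i : ℕ) : ℝ) + 1) - 1 / ((k : ℝ) + 1)) * (((j - i : ℕ) : ℝ) + 1))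
        ≤ s ^ (-a * ((2 * (k : ℝ) - j) / ((k : ℝ) + 1))) := by
      rw [← Real.rpow_add hs0]
      apply Real.rpow_le_rpow_of_exponent_ge hs0 hs1.le
      have h1 : (1 / ((ℓ : ℝ) + 1) - 1 / ((k : ℝ) + 1)) * (((ℓ : ℝ) + 1) * θ)
          = θ - ((ℓ : ℝ) + 1) * θ / ((k : ℝ) + 1) := by field_simp
      have h2 : (1 / (((j - i : ℕ) : ℝ) + 1) - 1 / ((k : ℝ) + 1)) * (((j - i : ℕ) : ℝ) + 1)
          = 1 - ((j : ℝ) - i + 1) / ((k : ℝ) + 1) := by rw [← hsub]; field_simp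
      have h3 : θ - ((ℓ : ℝ) + 1) * θ / ((k : ℝ) + 1) + (1 - ((j : ℝ) - i + 1) / ((k : ℝ) + 1))
          ≤ (2 * (k : ℝ) - j) / ((k : ℝ) + 1) := by
        have h4 : (2 * (k : ℝ) - j) / ((k : ℝ) + 1) - (θ - ((ℓ : ℝ) + 1) * θ / ((k : ℝ) + 1)
            + (1 - ((j : ℝ) - i + 1) / ((k : ℝ) + 1)))
            = (1 - θ) + (1 - θ) / 2 / ((k : ℝ) + 1) := by
          field_simp
          linarith
        have h5 : 0 ≤ (1 - θ) + (1 - θ) / 2 / ((k : ℝ) + 1) := by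
          have : 0 ≤ 1 - θ := by linarith
          positivity
        linarith
      rw [mul_assoc, mul_assoc, h1, h2]
      nlinarith [mul_le_mul_of_nonneg_left h3 ha0]
    have hme : (Nat.factorial ℓ : ℝ) ^ θ * m ^ ((1 - θ) / 2) ≤ Real.sqrt m := by
      have hsq : 0 < Real.sqrt m := Real.sqrt_pos.mpr hm0
      have h1 : m ^ ((1 - θ) / 2) = Real.sqrt m ^ (1 - θ) := by
        rw [Real.sqrt_eq_rpow, ← Real.rpow_mul hm0.le]; congr 1; ring
      calc _ ≤ Real.sqrt m ^ θ * Real.sqrt m ^ (1 - θ) := by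
            rw [h1]
            gcongr
        _ = Real.sqrt m := by rw [← Real.rpow_add hsq]; simp
    have hce : (j.choose i : ℝ) * (Nat.factorial (j - i) : ℝ) ≤ (Nat.factorial j : ℝ) := by
      have h := Nat.choose_mul_factorial_mul_factorial hij
      have h' : j.choose i * Nat.factorial (j - i) ≤ Nat.factorial j := by
        rw [← h]
        exact Nat.mul_le_mul_right _ (Nat.le_mul_of_pos_right _ (Nat.factorial_pos i))
      exact_mod_cast h'
    rw [← hGe]
    calc _ = ((Nat.factorial ℓ : ℝ) ^ θ * m ^ ((1 - θ) / 2))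
          * ((j.choose i : ℝ) * (Nat.factorial (j - i) : ℝ))
          * (G ^ (-(((ℓ : ℝ) + 1) * θ / ((k : ℝ) + 1)))
            * G ^ (-((((j - i : ℕ) : ℝ) + 1) / ((k : ℝ) + 1)))
            * G ^ (1 / ((k : ℝ) + 1) * ((1 - θ) / 2)))
          * (s ^ (-a * (1 / ((ℓ : ℝ) + 1) - 1 / ((k : ℝ) + 1)) * (((ℓ : ℝ) + 1) * θ))
            * s ^ (-a * (1 / (((j - i : ℕ) : ℝ) + 1) - 1 / ((k : ℝ) + 1))
              * (((j - i : ℕ) : ℝ) + 1))) := by ring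
      _ ≤ _ := by gcongr
  refine (Finset.sum_le_sum term).trans (le_of_eq ?_)
  rw [Finset.sum_const, Nat.card_Icc, nsmul_eq_mul]
  push_cast
  ring
end
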